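/- Let V be a nonempty Gotzmann set of monomials of degree d in K[x_1,…,x_n]. Then for every i = 1, 2, …, n one has \overline{|V|}^{(n−1)} ≤ |D_i(V)| ≤ |V|_{<<n−1>>}. -/

import Mathlib

/-!
Write `h^{<m>}` for `macUp m h` and `h_{<<m>>}` for `macDDown m h`. Slice `V` by the exponent of
`x_i`: the slice `D` of least exponent is `D_i(V)`, and `K` is the rest. In `MV`, the monomials of
least exponent in `x_i` form the shadow of `D` in the other variables, while the remaining ones
contain both `x_i V` and `MK`. Hence `|MV| ≥ |M'D| + max(|V|, |MK|)`, where `M'` is the set of the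
other variables (`card_shad_ge_self`, `card_shad_ge_shad`).

*Macaulay's bound* `|MV| ≥ |V|^{<m>}` in `m + 1` variables (`macaulay`) follows by induction, with
`h = |V|`. If `|D| ≥ h_{<<m>>}`, use `h^{<m>} = h + (h_{<<m>>})^{<m-1>}` (`macUp_eq_add`);
otherwise use the inequality `h^{<m>} ≤ |D|^{<m-1>} + (h - |D|)^{<m>}` (`macUp_le_split`).

*Upper bound.* For a Gotzmann set,
`|D|^{<m-1>} + |V| ≤ |V|^{<m>} = |V| + (|V|_{<<m>>})^{<m-1>}`, and `h ↦ h^{<m-1>}` is strictly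
increasing.

*Lower bound.* Let `B = C(α+m, m)` be the number subtracted in the definition of `barOp`. If
`|D| < |V| - B`, then `|K| > B`, and on the block `[C(α+m, m), C(α+m+1, m)]` the function `h^{<m>}`
is `C(α+m+1, m) + (h - B)^{<m-1>}`. The inequality `|D|^{<m-1>} + |K|^{<m>} ≤ |V|^{<m>}` then
contradicts the strict subadditivity of `h^{<m-1>}` (`macUp_add_lt`) if `m ≥ 2`; for `m = 1` the
blocks are too short for such a `K`.

The arithmetic rests on the block formula `macUp_block`: the increments of `macUp (m + 1)` are, after
the first one, the concatenation of initial segments of lengths `C(a, m)` of the increments of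
`macUp m`. By induction on `m`, initial windows of increments have the largest sums (`SubAdd`) and
final windows of a full block have the smallest ones (`EndMin`).
-/


open Finset

/-- `macUp n h` is `h^{<n>}`, computed via the greedy (Macaulay) binomial
representation `h = C(a_n, n) + C(a_{n-1}, n-1) + ⋯` (equivalently
`h = C(h(n)+n, n) + ⋯ + C(h(i)+i, i)` with `h(n) ≥ ⋯ ≥ h(i) ≥ 0`), giving
`h^{<n>} = C(a_n+1, n) + C(a_{n-1}+1, n-1) + ⋯`; `macUp n 0 = 0`, `macUp 0 1 = 1`. -/
def macUp : ℕ → ℕ → ℕ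
  | 0, h => h
  | n+1, h =>
    if h = 0 then 0
    else
      let a := Nat.findGreatest (fun a => Nat.choose a (n+1) ≤ h) (h + n + 1)
      Nat.choose (a+1) (n+1) + macUp n (h - Nat.choose a (n+1))
/-- `macDDown n h` is `h_{<<n>>} = C(a_n-1, n-1) + C(a_{n-1}-1, n-2) + ⋯` where
`h = C(a_n, n) + C(a_{n-1}, n-1) + ⋯` is the `n`th binomial representation;
`macDDown n 0 = 0` and `macDDown 0 1 = 1`. -/
def macDDown : ℕ → ℕ → ℕ
  | 0, h => h
  | n+1, h =>
    if h = 0 then 0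
    else
      let a := Nat.findGreatest (fun a => Nat.choose a (n+1) ≤ h) (h + n + 1)
      Nat.choose (a-1) n + macDDown n (h - Nat.choose a (n+1))
/-- `barOp n h` is `h̄^{(n)} = h - C(α+n, n)` where
`α = max {0, max {a ∈ ℤ : h - C(a+n, n) > 0}}`. -/
def barOp (n h : ℕ) : ℕ :=
  h - Nat.choose (Nat.findGreatest (fun a => Nat.choose (a + n) n < h) h + n) n
/-- Monomials in `K[x_1,…,x_n]` are identified with their exponent vectors
`Fin n → ℕ`; the degree of `v` is `∑ i, v i`.  `shad V` is the set
`MV = {x_j v : v ∈ V, 1 ≤ j ≤ n}`. -/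
def shad {n : ℕ} (V : Finset (Fin n → ℕ)) : Finset (Fin n → ℕ) :=
  (Finset.univ ×ˢ V).image fun p => p.2 + Pi.single p.1 1
/-- `gcd(V)` of a set of monomials: the exponentwise minimum. -/
noncomputable def gcdMon {n : ℕ} (V : Finset (Fin n → ℕ)) : Fin n → ℕ :=
  fun i => sInf ((fun v => v i) '' (V : Set (Fin n → ℕ)))
open Classical in
/-- `K_i(V)`: for `|V| ≤ 1` it is `V`; otherwise the set of monomials of `V`
divisible by `x_i · gcd(V)`. -/
noncomputable def Kset {n : ℕ} (V : Finset (Fin n → ℕ)) (i : Fin n) : Finset (Fin n → ℕ) :=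
  if V.card ≤ 1 then V
  else V.filter fun v => ∀ j, gcdMon V j + (Pi.single i 1 : Fin n → ℕ) j ≤ v j

/-- `D_i(V) = V \ K_i(V)`. -/
noncomputable def Dset {n : ℕ} (V : Finset (Fin n → ℕ)) (i : Fin n) : Finset (Fin n → ℕ) :=
  V \ Kset V i

/-! ### The operators `macUp` and `macDDown` along blocks -/

theorem le_choose_aux (a m : ℕ) : a ≤ a.choose (m + 1) + m := by
  induction a with
  | zero => simp
  | succ a ih =>
    rcases Nat.lt_or_ge a m with h | h
    · omega
    · have := Nat.choose_pos h
      rw [Nat.choose_succ_succ']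
      omega

theorem findGreatest_choose (m a b : ℕ) (hb : b < a.choose m) :
    Nat.findGreatest (fun x => Nat.choose x (m + 1) ≤ a.choose (m + 1) + b)
      (a.choose (m + 1) + b + m + 1) = a := by
  rw [Nat.findGreatest_eq_iff]
  refine ⟨?_, fun _ => Nat.le_add_right _ _, fun {n} hn _ hle => ?_⟩
  · have := le_choose_aux a m
    omega
  · have h1 : (a + 1).choose (m + 1) ≤ n.choose (m + 1) := Nat.choose_le_choose _ hn
    rw [Nat.choose_succ_succ'] at h1
    omega

theorem macUp_zero_right (m : ℕ) : macUp m 0 = 0 := by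
  cases m <;> simp [macUp]

theorem macDDown_zero_right (m : ℕ) : macDDown m 0 = 0 := by
  cases m <;> simp [macDDown]

theorem macUp_block_lt {m a b : ℕ} (ha : m + 1 ≤ a) (hb : b < a.choose m) :
    macUp (m + 1) (a.choose (m + 1) + b) = (a + 1).choose (m + 1) + macUp m b := by
  have hp := Nat.choose_pos ha
  rw [macUp, if_neg (by omega)]
  simp only [findGreatest_choose m a b hb]
  simp

theorem macDDown_block_lt {m a b : ℕ} (ha : m + 1 ≤ a) (hb : b < a.choose m) :
    macDDown (m + 1) (a.choose (m + 1) + b) = (a - 1).choose m + macDDown m b := by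
  have hp := Nat.choose_pos ha
  rw [macDDown, if_neg (by omega)]
  simp only [findGreatest_choose m a b hb]
  simp

theorem macUp_choose {m a : ℕ} (ha : m ≤ a) : macUp m (a.choose m) = (a + 1).choose m := by
  cases m with
  | zero => simp [macUp]
  | succ m =>
    have := macUp_block_lt ha (Nat.choose_pos (by omega : m ≤ a))
    simpa [macUp_zero_right] using this

/-- The block formula for `macUp`, valid on closed blocks: at the right end `b = C(a, m)` it
agrees with the value at the left end of the next block, and `a = m` covers the argument `1`. -/
theorem macUp_block {m a b : ℕ} (ha : m ≤ a) (hb : b ≤ a.choose m)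
    (hpos : 0 < a.choose (m + 1) + b) :
    macUp (m + 1) (a.choose (m + 1) + b) = (a + 1).choose (m + 1) + macUp m b := by
  rcases hb.lt_or_eq with h | h
  · rcases ha.lt_or_eq with h' | h'
    · exact macUp_block_lt h' h
    · subst h'
      simp at h hpos
      omega
  · subst h
    have e : a.choose (m + 1) + a.choose m = (a + 1).choose (m + 1) := by
      rw [Nat.choose_succ_succ']; omega
    rw [e, macUp_choose ha, macUp_choose (by omega), Nat.choose_succ_succ' (a + 1)]
    omega

theorem macUp_block_le {m a b : ℕ} (ha : m ≤ a) (hb : b ≤ a.choose m) :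
    macUp (m + 1) (a.choose (m + 1) + b) ≤ (a + 1).choose (m + 1) + macUp m b := by
  rcases Nat.eq_zero_or_pos (a.choose (m + 1) + b) with h | h
  · rw [h, macUp_zero_right]; omega
  · exact (macUp_block ha hb h).le

/-- Every positive number lies in some half-open block `[C(a, m+1), C(a+1, m+1))`. -/
theorem exists_block (m : ℕ) {h : ℕ} (hh : 0 < h) :
    ∃ a b, m + 1 ≤ a ∧ b < a.choose m ∧ h = a.choose (m + 1) + b := by
  induction h with
  | zero => omega
  | succ h ih =>
    rcases Nat.eq_zero_or_pos h with rfl | h0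
    · exact ⟨m + 1, 0, le_rfl, Nat.choose_pos (by omega), by simp⟩
    · obtain ⟨a, b, ha, hb, e⟩ := ih h0
      rcases Nat.lt_or_ge (b + 1) (a.choose m) with h1 | h1
      · exact ⟨a, b + 1, ha, h1, by omega⟩
      · refine ⟨a + 1, 0, by omega, Nat.choose_pos (by omega), ?_⟩
        rw [Nat.choose_succ_succ']
        omega

/-- Every positive number lies in some block `(C(a, m+1), C(a+1, m+1)]`. -/
theorem exists_block' (m : ℕ) {h : ℕ} (hh : 0 < h) :
    ∃ a b, m ≤ a ∧ 0 < b ∧ b ≤ a.choose m ∧ h = a.choose (m + 1) + b := by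
  obtain ⟨h, rfl⟩ : ∃ k, h = k + 1 := ⟨h - 1, by omega⟩
  rcases Nat.eq_zero_or_pos h with rfl | h0
  · exact ⟨m, 1, le_rfl, by omega, by simp, by simp⟩
  · obtain ⟨a, b, ha, hb, e⟩ := exists_block m h0
    exact ⟨a, b + 1, by omega, by omega, by omega, by omega⟩

theorem macUp_strictMono (m : ℕ) : StrictMono (macUp m) := by
  induction m with
  | zero => intro a b h; simpa [macUp] using h
  | succ m ih =>
    refine strictMono_nat_of_lt_succ fun h => ?_
    obtain ⟨a, b, ha, hb0, hb, e⟩ := exists_block' m (Nat.succ_pos h)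
    obtain ⟨b, rfl⟩ : ∃ k, b = k + 1 := ⟨b - 1, by omega⟩
    have e' : h = a.choose (m + 1) + b := by omega
    have h1 := macUp_block_le ha (by omega : b ≤ a.choose m)
    have h2 := macUp_block ha hb (by omega)
    have h3 : macUp m b < macUp m (b + 1) := ih (by omega)
    rw [show h + 1 = a.choose (m + 1) + (b + 1) by omega, h2, e']
    omega

theorem macDDown_le (m h : ℕ) : macDDown m h ≤ h := by
  induction m generalizing h with
  | zero => simp [macDDown]
  | succ m ih =>
    rcases Nat.eq_zero_or_pos h with rfl | h0
    · simp [macDDown_zero_right]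
    · obtain ⟨a, b, ha, hb, rfl⟩ := exists_block m h0
      obtain ⟨a, rfl⟩ : ∃ k, a = k + 1 := ⟨a - 1, by omega⟩
      have := ih b
      rw [macDDown_block_lt ha hb, Nat.choose_succ_succ']
      simp
      omega

theorem macDDown_le_choose {m a b : ℕ} (hb : b ≤ (a + 1).choose (m + 1)) :
    macDDown (m + 1) b ≤ a.choose m := by
  induction m generalizing a b with
  | zero =>
    rcases Nat.eq_zero_or_pos b with rfl | h0
    · simp [macDDown_zero_right]
    · obtain ⟨c, b', hc, hb', rfl⟩ := exists_block 0 h0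
      rw [macDDown_block_lt hc hb']
      simp at hb'
      simp [hb', macDDown]
  | succ m ih =>
    rcases Nat.eq_zero_or_pos b with rfl | h0
    · simp [macDDown_zero_right]
    · obtain ⟨c, b', hc, hb', rfl⟩ := exists_block (m + 1) h0
      obtain ⟨c, rfl⟩ : ∃ k, c = k + 1 := ⟨c - 1, by omega⟩
      rw [macDDown_block_lt hc hb']
      simp only [Nat.add_sub_cancel]
      have hca : c ≤ a := by
        by_contra hlt
        have h1 : (a + 1 + 1).choose (m + 1 + 1) ≤ (c + 1).choose (m + 1 + 1) :=
          Nat.choose_le_choose _ (by omega)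
        have h2 : 0 < (a + 1).choose (m + 1) := by
          by_contra h3
          have h4 : (a + 1).choose (m + 1) = 0 := by omega
          rw [Nat.choose_eq_zero_iff] at h4
          have h5 : (a + 1).choose (m + 1 + 1) = 0 := Nat.choose_eq_zero_of_lt (by omega)
          omega
        rw [Nat.choose_succ_succ'] at h1
        omega
      rcases hca.lt_or_eq with h1 | h1
      · have h2 := ih hb'.le
        have h3 : (c + 1).choose (m + 1) ≤ a.choose (m + 1) := Nat.choose_le_choose _ (by omega)
        rw [Nat.choose_succ_succ'] at h3
        omega
      · subst h1
        have : b' = 0 := by omega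
        simp [this, macDDown_zero_right]

/-- Pascal's rule, summed along the binomial representation. -/
theorem macUp_eq_add (m : ℕ) {h : ℕ} (hh : 0 < h) :
    macUp (m + 1) h = h + macUp m (macDDown (m + 1) h) := by
  induction m generalizing h with
  | zero =>
    obtain ⟨c, b', hc, hb', rfl⟩ := exists_block 0 hh
    rw [macDDown_block_lt hc hb', macUp_block_lt hc hb']
    simp at hb'
    simp [hb', macDDown, macUp]
  | succ m ih =>
    obtain ⟨a, b, ha, hb, rfl⟩ := exists_block (m + 1) hh
    obtain ⟨a, rfl⟩ : ∃ k, a = k + 1 := ⟨a - 1, by omega⟩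
    have h1 : macUp (m + 1) b = b + macUp m (macDDown (m + 1) b) := by
      rcases Nat.eq_zero_or_pos b with rfl | h0
      · simp [macDDown_zero_right, macUp_zero_right]
      · exact ih h0
    have hp : 0 < a.choose (m + 1) := Nat.choose_pos (by omega)
    rw [macDDown_block_lt ha hb, macUp_block_lt ha hb, Nat.add_sub_cancel,
      macUp_block (by omega) (macDDown_le_choose hb.le) (by omega), h1,
      Nat.choose_succ_succ' (a + 1)]
    omega

/-! ### Subadditivity and superadditivity at the ends of a block -/

/-- `macUp m` is subadditive. -/
def SubAdd (m : ℕ) : Prop := ∀ x y, macUp m (x + y) ≤ macUp m x + macUp m y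

/-- Among all pairs in `[0, N]²` with a prescribed sum at least `N = C(a, m)`, the pair with an
entry equal to `N` minimises the sum of the values of `macUp m`. -/
def EndMin (m : ℕ) : Prop := ∀ a x y z : ℕ, x ≤ a.choose m → y ≤ a.choose m →
  x + y = a.choose m + z → macUp m (a.choose m) + macUp m z ≤ macUp m x + macUp m y

/-- The increment of `macUp m` over the last `e` steps below `B = C(b, m)` is at most the
increment of `macUp (m + 1)` over any `e` consecutive steps below `C(b + 1, m + 1)`. -/
theorem tail_le {m : ℕ} (hS : SubAdd m) (hT : EndMin m) (b y : ℕ) :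
    ∀ e, e ≤ y → e ≤ b.choose m → y ≤ (b + 1).choose (m + 1) →
    macUp m (b.choose m) + macUp (m + 1) (y - e) ≤
      macUp (m + 1) y + macUp m (b.choose m - e) := by
  induction y using Nat.strong_induction_on with
  | _ y ih =>
    intro e hey heB hyN
    rcases Nat.eq_zero_or_pos e with rfl | he
    · simp; omega
    obtain ⟨c, y', hc, hy0, hy', rfl⟩ := exists_block' m (by omega : 0 < y)
    have hcb : c ≤ b := by
      by_contra hlt
      have : (b + 1).choose (m + 1) ≤ c.choose (m + 1) := Nat.choose_le_choose _ (by omega)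
      omega
    have hcB : c.choose m ≤ b.choose m := Nat.choose_le_choose _ hcb
    have hfy := macUp_block hc hy' (by omega)
    rcases Nat.lt_or_ge y' e with h1 | h1
    · -- The window also covers `e - y'` steps below the start of the block of `y`.
      have h2 := ih (c.choose (m + 1)) (by omega) (e - y') (by omega) (by omega) (by omega)
      have h3 := hS (b.choose m - e) y'
      rw [show b.choose m - e + y' = b.choose m - (e - y') by omega] at h3
      have hcm : m + 1 ≤ c := by
        by_contra hlt
        have := Nat.choose_eq_zero_of_lt (by omega : c < m + 1)
        omega
      rw [macUp_choose hcm] at h2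
      rw [show c.choose (m + 1) + y' - e = c.choose (m + 1) - (e - y') by omega, hfy]
      omega
    · have h2 := hT b y' (b.choose m - e) (y' - e) (by omega) (by omega) (by omega)
      have h3 := macUp_block_le hc (by omega : y' - e ≤ c.choose m)
      rw [show c.choose (m + 1) + y' - e = c.choose (m + 1) + (y' - e) by omega, hfy]
      omega

theorem endMin_succ {m : ℕ} (hS : SubAdd m) (hT : EndMin m) : EndMin (m + 1) := by
  intro a
  induction a with
  | zero =>
    intro x y z hx hy hz
    simp at hx hy hz
    simp [← hz, hx, hy]
  | succ a ih =>
    have key : ∀ x y z, a.choose (m + 1) ≤ x → x ≤ (a + 1).choose (m + 1) →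
        y ≤ (a + 1).choose (m + 1) → x + y = (a + 1).choose (m + 1) + z →
        macUp (m + 1) ((a + 1).choose (m + 1)) + macUp (m + 1) z ≤
          macUp (m + 1) x + macUp (m + 1) y := by
      intro x y z hx' hx hy hz
      rcases Nat.eq_zero_or_pos x with rfl | hx0
      · have h1 : y = (a + 1).choose (m + 1) := by omega
        have h2 : z = 0 := by omega
        subst h1 h2
        omega
      have hN : (a + 1).choose (m + 1) = a.choose m + a.choose (m + 1) := Nat.choose_succ_succ' _ _
      have ham : m ≤ a := by
        by_contra hlt
        have := Nat.choose_eq_zero_of_lt (by omega : a + 1 < m + 1)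
        omega
      have h1 := tail_le hS hT a y ((a + 1).choose (m + 1) - x) (by omega) (by omega) hy
      have h2 := macUp_block ham (by omega : x - a.choose (m + 1) ≤ a.choose m) (by omega)
      have h3 := macUp_block ham (le_refl (a.choose m)) (by omega)
      rw [show a.choose (m + 1) + (x - a.choose (m + 1)) = x by omega] at h2
      rw [show a.choose (m + 1) + a.choose m = (a + 1).choose (m + 1) by omega] at h3
      rw [show y - ((a + 1).choose (m + 1) - x) = z by omega,
        show a.choose m - ((a + 1).choose (m + 1) - x) = x - a.choose (m + 1) by omega] at h1
      omega
    have hmono : a.choose (m + 1) ≤ (a + 1).choose (m + 1) := Nat.choose_le_choose _ (by omega)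
    intro x y z hx hy hz
    rcases Nat.lt_or_ge x (a.choose (m + 1)) with h1 | h1
    · rcases Nat.lt_or_ge y (a.choose (m + 1)) with h2 | h2
      · have h3 := ih x y (x + y - a.choose (m + 1)) h1.le h2.le (by omega)
        have h4 := key (a.choose (m + 1)) (x + y - a.choose (m + 1)) z le_rfl hmono (by omega)
          (by omega)
        omega
      · have := key y x z h2 hy hx (by omega)
        omega
    · exact key x y z h1 hx hy hz

theorem macUp_lt_succ {m : ℕ} (hS : SubAdd m) {y : ℕ} (hy : 0 < y) :
    macUp m y < macUp (m + 1) y := by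
  induction y using Nat.strong_induction_on with
  | _ y ih =>
    obtain ⟨c, y', hc, hy0, hy', rfl⟩ := exists_block' m hy
    rw [macUp_block hc hy' hy]
    have h1 := hS (c.choose (m + 1)) y'
    have h2 : 0 < (c + 1).choose (m + 1) := Nat.choose_pos (by omega)
    rcases Nat.eq_zero_or_pos (c.choose (m + 1)) with h0 | h0
    · rw [h0] at h1 ⊢
      rw [macUp_zero_right] at h1
      omega
    · have hcm : m + 1 ≤ c := by
        by_contra hlt
        have := Nat.choose_eq_zero_of_lt (by omega : c < m + 1)
        omega
      have h3 := ih _ (by omega) h0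
      rw [macUp_choose hcm] at h3
      omega

theorem strict_subAdd_succ {m : ℕ} (hS : SubAdd m) (hT : EndMin (m + 1)) {x y : ℕ}
    (hx : 0 < x) (hy : 0 < y) : macUp (m + 1) (x + y) < macUp (m + 1) x + macUp (m + 1) y := by
  have key : ∀ y, 0 < y → ∀ x, y ≤ x →
      macUp (m + 1) (x + y) < macUp (m + 1) x + macUp (m + 1) y := by
    intro y
    induction y using Nat.strong_induction_on with
    | _ y ih =>
      intro hy x hyx
      obtain ⟨a, b, ha, hb, rfl⟩ := exists_block m (by omega : 0 < x)
      have hpos := Nat.choose_pos ha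
      rcases Nat.lt_or_ge (a.choose m) (b + y) with h1 | h1
      · -- Move mass from `y` to `x` until `x` reaches the end of its block.
        have hN : (a + 1).choose (m + 1) = a.choose m + a.choose (m + 1) :=
          Nat.choose_succ_succ' _ _
        have h2 := ih (b + y - a.choose m) (by omega) (by omega) ((a + 1).choose (m + 1))
          (by omega)
        have h3 := hT (a + 1) (a.choose (m + 1) + b) y (b + y - a.choose m) (by omega) (by omega)
          (by omega)
        rw [show (a + 1).choose (m + 1) + (b + y - a.choose m) = a.choose (m + 1) + b + y by
          omega] at h2
        omega
      · have h2 := hS b y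
        have h3 := macUp_lt_succ hS hy
        rw [add_assoc, macUp_block (by omega) h1 (by omega), macUp_block_lt ha hb]
        omega
  rcases le_total y x with h | h
  · exact key y hy x h
  · have := key x hx y h
    rw [add_comm y x] at this
    omega

theorem subAdd_and_endMin (m : ℕ) : SubAdd m ∧ EndMin m := by
  induction m with
  | zero =>
    constructor
    · intro x y; simp [macUp]
    · intro a x y z hx hy hz
      simp [macUp] at *
      omega
  | succ m ih =>
    have hT := endMin_succ ih.1 ih.2
    refine ⟨fun x y => ?_, hT⟩
    rcases Nat.eq_zero_or_pos x with rfl | hx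
    · simp
    rcases Nat.eq_zero_or_pos y with rfl | hy
    · simp
    exact (strict_subAdd_succ ih.1 hT hx hy).le

theorem macUp_add_lt {m x y : ℕ} (hx : 0 < x) (hy : 0 < y) :
    macUp (m + 1) (x + y) < macUp (m + 1) x + macUp (m + 1) y :=
  strict_subAdd_succ (subAdd_and_endMin m).1 (subAdd_and_endMin (m + 1)).2 hx hy

/-- The arithmetic core of Macaulay's bound: splitting off a slice of size `D` smaller than
`h_{<<m+1>>}` does not decrease the predicted growth. -/
theorem macUp_le_split (m : ℕ) {h D : ℕ} (hD : D < macDDown (m + 1) h) :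
    macUp (m + 1) h ≤ macUp m D + macUp (m + 1) (h - D) := by
  induction m generalizing h D with
  | zero =>
    have : macDDown (0 + 1) h ≤ 1 := by
      have := @macDDown_le_choose 0 h h (by simp)
      simpa using this
    have h0 : D = 0 := by omega
    simp [h0]
  | succ m ih =>
    have hle := macDDown_le (m + 1 + 1) h
    obtain ⟨a, b, ha, hb, rfl⟩ := exists_block (m + 1) (by omega : 0 < h)
    obtain ⟨a, rfl⟩ : ∃ k, a = k + 1 := ⟨a - 1, by omega⟩
    obtain ⟨hS, hT⟩ := subAdd_and_endMin (m + 1)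
    have hp := Nat.choose_pos ha
    rcases Nat.lt_or_ge b D with h1 | h1
    · have hgb := macDDown_le (m + 1) b
      have hgb' := macDDown_le_choose hb.le
      have hD' := hD
      rw [macDDown_block_lt ha hb, Nat.add_sub_cancel] at hD'
      have hN : (a + 1).choose (m + 1 + 1) = a.choose (m + 1) + a.choose (m + 1 + 1) :=
        Nat.choose_succ_succ' _ _
      have hN' : (a + 1 + 1).choose (m + 1 + 1) =
        (a + 1).choose (m + 1) + (a + 1).choose (m + 1 + 1) := Nat.choose_succ_succ' _ _
      have h2 := macUp_block (by omega : m + 1 ≤ a)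
        (by omega : a.choose (m + 1) - (D - b) ≤ a.choose (m + 1)) (by omega)
      rw [macUp_block_lt ha hb, show (a + 1).choose (m + 1 + 1) + b - D =
        a.choose (m + 1 + 1) + (a.choose (m + 1) - (D - b)) by omega, h2]
      have h3 : macUp (m + 1) (a.choose (m + 1)) = (a + 1).choose (m + 1) :=
        macUp_choose (by omega)
      suffices macUp (m + 1) (a.choose (m + 1)) + macUp (m + 1) b ≤
          macUp (m + 1) D + macUp (m + 1) (a.choose (m + 1) - (D - b)) by omega
      rcases Nat.lt_or_ge (a.choose (m + 1)) D with h4 | h4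
      · -- Beyond the end of its block, `D` is compared by the same claim one level below.
        have h5 := macUp_block (by omega : m ≤ a)
          (by omega : D - a.choose (m + 1) ≤ a.choose m) (by omega)
        rw [show a.choose (m + 1) + (D - a.choose (m + 1)) = D by omega] at h5
        have h6 := @ih b (D - a.choose (m + 1)) (by omega)
        rw [show b - (D - a.choose (m + 1)) = a.choose (m + 1) - (D - b) by omega] at h6
        omega
      · exact hT a D _ b h4 (by omega) (by omega)
    · have h2 := hS (b - D) D
      rw [show b - D + D = b by omega] at h2
      rw [show (a + 1).choose (m + 1 + 1) + b - D = (a + 1).choose (m + 1 + 1) + (b - D) by omega,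
        macUp_block_lt ha hb, macUp_block_lt ha (by omega)]
      omega

/-! ### Slicing a set of monomials and Macaulay's bound -/

theorem mem_shad {n : ℕ} {V : Finset (Fin n → ℕ)} {w : Fin n → ℕ} :
    w ∈ shad V ↔ ∃ j, ∃ v ∈ V, w = v + Pi.single j 1 := by
  simp only [shad, Finset.mem_image, Finset.mem_product, Finset.mem_univ, true_and, Prod.exists]
  constructor
  · rintro ⟨j, v, hv, rfl⟩; exact ⟨j, v, hv, rfl⟩
  · rintro ⟨j, v, hv, rfl⟩; exact ⟨j, v, hv, rfl⟩

/-- The slice `{v ∈ V : v i = c}`, with the `i`th variable removed. -/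
def slice {n : ℕ} (V : Finset (Fin (n + 1) → ℕ)) (i : Fin (n + 1)) (c : ℕ) :
    Finset (Fin n → ℕ) :=
  (V.filter fun v => v i = c).image i.removeNth

theorem card_slice {n : ℕ} (V : Finset (Fin (n + 1) → ℕ)) (i : Fin (n + 1)) (c : ℕ) :
    (slice V i c).card = (V.filter fun v => v i = c).card := by
  refine Finset.card_image_of_injOn fun v hv w hw h => ?_
  simp only [Finset.coe_filter, Set.mem_ofPred_eq] at hv hw
  rw [← Fin.insertNth_self_removeNth i v, ← Fin.insertNth_self_removeNth i w, h, hv.2, hw.2]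

/-- The shadow of `V` contains a copy of the shadow, in the remaining variables, of the slice at
`c`; all its elements have `i`th exponent `c`, so it is disjoint from any `S` avoiding this
exponent. -/
theorem shad_slice_aux {n : ℕ} (V S : Finset (Fin (n + 1) → ℕ)) (i : Fin (n + 1)) (c : ℕ)
    (hS : ∀ w ∈ S, w ∈ shad V ∧ w i ≠ c) :
    (shad (slice V i c)).card + S.card ≤ (shad V).card := by
  have hinj : Function.Injective (fun u : Fin n → ℕ => (i.insertNth c u : Fin (n + 1) → ℕ)) := by
    intro u w h
    have := congrArg i.removeNth h
    simpa using this
  rw [← Finset.card_image_of_injective (shad (slice V i c)) hinj, ← Finset.card_union_of_disjoint]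
  · refine Finset.card_le_card (Finset.union_subset ?_ fun w hw => (hS w hw).1)
    intro w hw
    obtain ⟨u, hu, rfl⟩ := Finset.mem_image.1 hw
    obtain ⟨j, u', hu', rfl⟩ := mem_shad.1 hu
    obtain ⟨v, hv, rfl⟩ := Finset.mem_image.1 hu'
    rw [Finset.mem_filter] at hv
    refine mem_shad.2 ⟨i.succAbove j, v, hv.1, ?_⟩
    ext k
    rcases Fin.eq_self_or_eq_succAbove i k with rfl | ⟨k, rfl⟩
    · simp [hv.2]
    · simp [Fin.removeNth, Pi.single_apply]
  · rw [Finset.disjoint_left]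
    intro w hw hw'
    obtain ⟨u, hu, rfl⟩ := Finset.mem_image.1 hw
    exact (hS _ hw').2 (by simp)

theorem card_shad_ge_self {n : ℕ} (V : Finset (Fin (n + 1) → ℕ)) (i : Fin (n + 1)) (c : ℕ)
    (hc : ∀ v ∈ V, c ≤ v i) :
    (shad (slice V i c)).card + V.card ≤ (shad V).card := by
  have hinj : Function.Injective (fun v : Fin (n + 1) → ℕ => v + Pi.single i 1) :=
    add_left_injective _
  rw [← Finset.card_image_of_injective V hinj]
  refine shad_slice_aux V _ i c fun w hw => ?_
  obtain ⟨v, hv, rfl⟩ := Finset.mem_image.1 hw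
  have := hc v hv
  refine ⟨mem_shad.2 ⟨i, v, hv, rfl⟩, ?_⟩
  simp
  omega

theorem card_shad_ge_shad {n : ℕ} (V : Finset (Fin (n + 1) → ℕ)) (i : Fin (n + 1)) (c : ℕ)
    (hc : ∀ v ∈ V, c ≤ v i) :
    (shad (slice V i c)).card + (shad (V.filter fun v => ¬ v i = c)).card ≤ (shad V).card := by
  refine shad_slice_aux V _ i c fun w hw => ?_
  obtain ⟨j, v, hv, rfl⟩ := mem_shad.1 hw
  rw [Finset.mem_filter] at hv
  have := hc v hv.1
  refine ⟨mem_shad.2 ⟨j, v, hv.1, rfl⟩, ?_⟩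
  simp only [Pi.add_apply]
  omega

/-- Macaulay's bound on the growth of a set of monomials; homogeneity plays no role in it. -/
theorem macaulay (m : ℕ) (V : Finset (Fin (m + 1) → ℕ)) :
    macUp m V.card ≤ (shad V).card := by
  induction m with
  | zero =>
    have hinj : Function.Injective (fun v : Fin (0 + 1) → ℕ => v + Pi.single 0 1) :=
      add_left_injective _
    rw [macUp, ← Finset.card_image_of_injective V hinj]
    refine Finset.card_le_card fun w hw => ?_
    obtain ⟨v, hv, rfl⟩ := Finset.mem_image.1 hw
    exact mem_shad.2 ⟨0, v, hv, rfl⟩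
  | succ m ihm =>
    induction hk : V.card using Nat.strong_induction_on generalizing V with
    | _ k ih =>
      subst hk
      rcases V.eq_empty_or_nonempty with rfl | hne
      · simp [macUp_zero_right]
      obtain ⟨v, hv, hmin⟩ := Finset.exists_min_image V (fun v => v 0) hne
      have hsum := Finset.card_filter_add_card_filter_not (s := V) (fun w => w 0 = v 0)
      have hDpos : 0 < (V.filter fun w => w 0 = v 0).card :=
        Finset.card_pos.2 ⟨v, Finset.mem_filter.2 ⟨hv, rfl⟩⟩
      have hcs := card_slice V 0 (v 0)
      have hD := ihm (slice V 0 (v 0))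
      have hV := card_shad_ge_self V 0 (v 0) hmin
      have hK := card_shad_ge_shad V 0 (v 0) hmin
      rcases Nat.lt_or_ge (slice V 0 (v 0)).card (macDDown (m + 1) V.card) with h | h
      · have h1 := macUp_le_split m h
        have h2 := ih _ (by omega) (V.filter fun w => ¬ w 0 = v 0) rfl
        rw [show V.card - (slice V 0 (v 0)).card = (V.filter fun w => ¬ w 0 = v 0).card by
          omega] at h1
        omega
      · have h1 := (macUp_strictMono m).monotone h
        rw [macUp_eq_add m (Finset.card_pos.2 hne)]
        omega

/-! ### Gotzmann sets -/

theorem gcdMon_le {n : ℕ} {V : Finset (Fin n → ℕ)} {v : Fin n → ℕ} (hv : v ∈ V) (i : Fin n) :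
    gcdMon V i ≤ v i :=
  Nat.sInf_le ⟨v, hv, rfl⟩

theorem exists_eq_gcdMon {n : ℕ} {V : Finset (Fin n → ℕ)} (hne : V.Nonempty) (i : Fin n) :
    ∃ v ∈ V, v i = gcdMon V i := by
  obtain ⟨v, hv, h⟩ := Nat.sInf_mem ((Finset.coe_nonempty.2 hne).image fun v => v i)
  exact ⟨v, hv, h⟩

/-- For `|V| > 1`, `D_i(V)` consists of the monomials of least exponent in `x_i`. -/
theorem Dset_eq {n : ℕ} {V : Finset (Fin n → ℕ)} (hV : 1 < V.card) (i : Fin n) :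
    Dset V i = V.filter fun v => v i = gcdMon V i := by
  classical
  ext v
  simp only [Dset, Kset, if_neg (not_le.2 hV), Finset.mem_sdiff, Finset.mem_filter]
  refine and_congr_right fun hv => ?_
  have h1 := gcdMon_le hv i
  constructor
  · intro h
    by_contra hne
    refine h ⟨hv, fun j => ?_⟩
    rcases eq_or_ne j i with rfl | hj
    · simp; omega
    · simpa [hj] using gcdMon_le hv j
  · rintro h ⟨-, h2⟩
    have := h2 i
    simp at this
    omega

/-- `\overline{h}^{(m)}` is obtained by subtracting the largest `C(α+m, m)` below `h`. -/
theorem barOp_spec {m h : ℕ} (hh : 1 < h) : ∃ α,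
    barOp (m + 1) h = h - (α + (m + 1)).choose (m + 1) ∧ (α + (m + 1)).choose (m + 1) < h ∧
      h ≤ (α + (m + 1) + 1).choose (m + 1) := by
  refine ⟨_, rfl, ?_, ?_⟩
  · exact Nat.findGreatest_spec (P := fun a => Nat.choose (a + (m + 1)) (m + 1) < h)
      (Nat.zero_le h) (by simpa using hh)
  · set α := Nat.findGreatest (fun a => Nat.choose (a + (m + 1)) (m + 1) < h) h with hα
    by_contra hlt
    have h1 := le_choose_aux (α + (m + 1) + 1) m
    have : α + 1 ≤ α := by
      refine Nat.le_findGreatest (by omega) ?_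
      rw [show α + 1 + (m + 1) = α + (m + 1) + 1 by omega]
      omega
    omega

/-- For a nonempty Gotzmann set `V` of monomials of degree `d` in `K[x_1,…,x_n]`
and every `i`, one has `\overline{|V|}^{(n-1)} ≤ |D_i(V)| ≤ |V|_{<<n-1>>}`. -/
theorem Dset_card_range {n d : ℕ} (hn : 0 < n) (V : Finset (Fin n → ℕ)) (hne : V.Nonempty)
    (hdeg : ∀ v ∈ V, ∑ i, v i = d)
    (hG : (shad V).card = macUp (n - 1) V.card) (i : Fin n) :
    barOp (n - 1) V.card ≤ (Dset V i).card ∧ (Dset V i).card ≤ macDDown (n - 1) V.card := by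
  have hpos := Finset.card_pos.2 hne
  rcases Nat.lt_or_ge 1 V.card with hV | hV
  swap
  · have h1 : V.card = 1 := by omega
    obtain ⟨α, hα⟩ : ∃ α, barOp (n - 1) 1 = 1 - (α + (n - 1)).choose (n - 1) := ⟨_, rfl⟩
    have := Nat.choose_pos (Nat.le_add_left (n - 1) α)
    simp [Dset, Kset, h1, hα]
    omega
  obtain ⟨m, rfl⟩ : ∃ m, n = m + 1 := ⟨n - 1, by omega⟩
  cases m with
  | zero =>
    -- In one variable there is only one monomial of each degree.
    exfalso
    obtain ⟨v, hv, w, hw, hvw⟩ := Finset.one_lt_card.1 hV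
    refine hvw (funext fun k => ?_)
    have h1 := hdeg v hv
    have h2 := hdeg w hw
    simp at h1 h2
    rw [Fin.fin_one_eq_zero k, h1, h2]
  | succ m =>
    simp only [Nat.add_sub_cancel] at hG ⊢
    rw [Dset_eq hV]
    have hmin : ∀ v ∈ V, gcdMon V i ≤ v i := fun v hv => gcdMon_le hv i
    obtain ⟨v, hv, hvi⟩ := exists_eq_gcdMon hne i
    have hcs := card_slice V i (gcdMon V i)
    have hM := macaulay m (slice V i (gcdMon V i))
    have hself := card_shad_ge_self V i (gcdMon V i) hmin
    have hK := card_shad_ge_shad V i (gcdMon V i) hmin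
    have hMK := macaulay (m + 1) (V.filter fun v => ¬ v i = gcdMon V i)
    have hsum := Finset.card_filter_add_card_filter_not (s := V) (fun v => v i = gcdMon V i)
    have hDpos : 0 < (V.filter fun w => w i = gcdMon V i).card :=
      Finset.card_pos.2 ⟨v, Finset.mem_filter.2 ⟨hv, hvi⟩⟩
    rw [hcs] at hM
    generalize (V.filter fun v => v i = gcdMon V i).card = D at *
    generalize (V.filter fun v => ¬ v i = gcdMon V i).card = k at *
    constructor
    · obtain ⟨α, hα, hlt, hle⟩ := barOp_spec (m := m) hV
      rw [hα]
      by_contra hcon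
      -- Otherwise `|K_i(V)|` and `|V|` lie in the same block, so that
      -- `|V|^{<m+1>} - |K_i(V)|^{<m+1>}` is an increment of `macUp m`.
      have hB : (α + (m + 1) + 1).choose (m + 1) =
        (α + (m + 1)).choose m + (α + (m + 1)).choose (m + 1) := Nat.choose_succ_succ' _ _
      generalize hBdef : (α + (m + 1)).choose (m + 1) = B at *
      have h1 := macUp_block (by omega : m ≤ α + (m + 1))
        (by omega : V.card - B ≤ (α + (m + 1)).choose m) (by omega)
      have h2 := macUp_block (by omega : m ≤ α + (m + 1))
        (by omega : k - B ≤ (α + (m + 1)).choose m) (by omega)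
      rw [hBdef, show B + (V.card - B) = V.card by omega] at h1
      rw [hBdef, show B + (k - B) = k by omega] at h2
      cases m with
      | zero =>
        simp only [zero_add, Nat.choose_one_right] at hBdef hle
        omega
      | succ m =>
        have h3 := macUp_add_lt (m := m) (by omega : 0 < k - B) hDpos
        rw [show k - B + D = V.card - B by omega] at h3
        omega
    · rw [macUp_eq_add m hpos] at hG
      exact (macUp_strictMono m).le_iff_le.1 (by omega)
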